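/- For each w ∈ {0, 1, 2}, the clause gadget built from three 12-suns G₁, G₂, G₃ admits a preimage in which exactly w of the three subgraphs T⁻¹(G₁), T⁻¹(G₂), T⁻¹(G₃) are isomorphic to the 12-wheel W₁₂ and the remaining ones are isomorphic to the squared 12-cycle C₁₂². -/

import Mathlib

open SimpleGraph

/-- The triangular line graph `T(G)` of a graph `G`: vertices are the edges of `G`,
with two edges adjacent iff they share an endpoint and lie in a common triangle. -/
def TriLine {V : Type*} (G : SimpleGraph V) : SimpleGraph G.edgeSet where
  Adj e₁ e₂ := ∃ u v w : V, G.Adj u v ∧ G.Adj v w ∧ G.Adj u w ∧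
      (e₁ : Sym2 V) = s(u, v) ∧ (e₂ : Sym2 V) = s(v, w)
  symm := by
    constructor
    rintro e₁ e₂ ⟨u, v, w, huv, hvw, huw, h₁, h₂⟩
    exact ⟨w, v, u, hvw.symm, huv.symm, huw.symm, by rw [h₂]; exact Sym2.eq_swap,
      by rw [h₁]; exact Sym2.eq_swap⟩
  loopless := by
    constructor
    rintro e ⟨u, v, w, huv, hvw, huw, h₁, h₂⟩
    rw [h₁, Sym2.eq_iff] at h₂
    rcases h₂ with ⟨h, _⟩ | ⟨h, _⟩
    · exact huv.ne h
    · exact huw.ne h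

/-- `H` is a triangular line graph: it is isomorphic to `T(G)` for some finite graph `G`. -/
def IsTriLineGraph {W : Type*} (H : SimpleGraph W) : Prop :=
  ∃ (V : Type) (_ : Fintype V) (G : SimpleGraph V), Nonempty (TriLine G ≃g H)

/-- Given a preimage `G` of `H` (via the isomorphism `f : T(G) ≃g H`) and a set `S` of
vertices of `H`, this is the subgraph of `G` consisting of the edges of `G` corresponding
to the vertices in `S` (together with their endpoints); i.e. `T⁻¹(S)`. -/
def edgePre {V W : Type*} (G : SimpleGraph V) {H : SimpleGraph W}
    (f : TriLine G ≃g H) (S : Set W) : G.Subgraph where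
  verts := {v | ∃ (u : V) (e : G.edgeSet), (e : Sym2 V) = s(v, u) ∧ (f e : W) ∈ S}
  Adj a b := G.Adj a b ∧ ∃ e : G.edgeSet, (e : Sym2 V) = s(a, b) ∧ (f e : W) ∈ S
  adj_sub h := h.1
  edge_vert := by
    rintro a b ⟨h, e, he, hS⟩
    exact ⟨b, e, he, hS⟩
  symm := by
    constructor
    rintro a b ⟨h, e, he, hS⟩
    exact ⟨h.symm, e, he.trans Sym2.eq_swap, hS⟩

/-- `A` occurs as a (not necessarily induced) subgraph of `B`. -/
def HasSubgraphIso {α β : Type*} (A : SimpleGraph α) (B : SimpleGraph β) : Prop :=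
  ∃ f : α → β, Function.Injective f ∧ ∀ a b, A.Adj a b → B.Adj (f a) (f b)

/-- Glue a graph along an identification relation `R`: the quotient graph on
the quotient of the vertex set by the equivalence generated by `R`. -/
def Glue {ι : Type*} (G : SimpleGraph ι) (R : ι → ι → Prop) :
    SimpleGraph (Quotient (Relation.EqvGen.setoid R)) :=
  SimpleGraph.fromRel (fun x y => ∃ a b : ι, G.Adj a b ∧ x = Quotient.mk _ a ∧ y = Quotient.mk _ b)

/-- The `k`-wheel: a `k`-cycle plus a dominating center vertex (`none`). -/
def wheelGraph (k : ℕ) : SimpleGraph (Option (ZMod k)) :=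
  SimpleGraph.fromRel (fun a b =>
    (∃ i : ZMod k, a = some i ∧ b = some (i + 1)) ∨ (a = none ∧ b ≠ none))

/-- The squared `k`-cycle: a `k`-cycle plus edges between vertices at distance two. -/
def squaredCycleGraph (k : ℕ) : SimpleGraph (ZMod k) :=
  SimpleGraph.fromRel (fun i j => j = i + 1 ∨ j = i + 2)

/-- The `k`-sun: a `k`-cycle (the `Sum.inl` vertices), with a new vertex (`Sum.inr i`)
for each cycle edge `{i, i+1}`, adjacent to both its endpoints. -/
def sunGraph (k : ℕ) : SimpleGraph (ZMod k ⊕ ZMod k) :=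
  SimpleGraph.fromRel (fun a b => ∃ i : ZMod k,
    (a = Sum.inl i ∧ b = Sum.inl (i + 1)) ∨
    (a = Sum.inr i ∧ b = Sum.inl i) ∨
    (a = Sum.inr i ∧ b = Sum.inl (i + 1)))

/-- Vertex type of a 12-sun: `Sum.inl i` are the cycle vertices `vᵢ`, and `Sum.inr i`
is the degree-two vertex `pᵢ` attached to the cycle edge `{vᵢ, vᵢ₊₁}`. -/
abbrev Sun12V : Type := ZMod 12 ⊕ ZMod 12

/-- Three disjoint copies `G₁, G₂, G₃` of the 12-sun, indexed by `ZMod 3`. -/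
def clauseBase : SimpleGraph (ZMod 3 × Sun12V) :=
  SimpleGraph.fromRel (fun a b => a.1 = b.1 ∧ (sunGraph 12).Adj a.2 b.2)

/-- The clause-gadget identifications: in each 12-sun take the two triangles
`⟨a₁, a₂, a₃⟩ = ⟨v₀, v₁, p₀⟩` and `⟨b₁, b₂, b₃⟩ = ⟨v₆, v₇, p₆⟩` at maximum distance
(five triangles apart; `a₃ = p₀` and `b₃ = p₆` have degree 2, and `a₁, a₂, b₁, b₂` lie on
the 12-cycle in this cyclic order), and identify `a_{ℓ,1} = b_{ℓ+1,1}`,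
`a_{ℓ,2} = b_{ℓ+1,3}`, `a_{ℓ,3} = b_{ℓ+1,2}` with subscripts mod 3. -/
def clauseRel : (ZMod 3 × Sun12V) → (ZMod 3 × Sun12V) → Prop := fun x y =>
  ∃ l : ZMod 3,
    (x = (l, Sum.inl 0) ∧ y = (l + 1, Sum.inl 6)) ∨
    (x = (l, Sum.inl 1) ∧ y = (l + 1, Sum.inr 6)) ∨
    (x = (l, Sum.inr 0) ∧ y = (l + 1, Sum.inl 7))

/-- The clause gadget: three 12-suns twisted together. -/
def clauseGadget : SimpleGraph (Quotient (Relation.EqvGen.setoid clauseRel)) :=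
  Glue clauseBase clauseRel

/-- The vertices of the clause gadget coming from the `l`-th 12-sun `G_l`. -/
def clauseSunVerts (l : ZMod 3) : Set (Quotient (Relation.EqvGen.setoid clauseRel)) :=
  Set.range (fun v : Sun12V => Quotient.mk _ (l, v))

/-! The triangular line graphs of the wheel `W_k` and the squared cycle `C_k²` are both the `k`-sun.
Choose one of these two roots for each of the three suns, and overlay the three roots so that edges
corresponding to identified vertices coincide. The triangular line graph of the overlay is then the
clause gadget, provided that every triangle of the overlay lies in a single root. This fails only
when all three roots are wheels, because their hubs then form an additional triangle. -/

section TriLine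

variable {V W : Type*} {G : SimpleGraph V}

theorem triLine_adj_mapEdgeSet {G' : SimpleGraph W} (g : G →g G') {e₁ e₂ : G.edgeSet}
    (h : (TriLine G).Adj e₁ e₂) : (TriLine G').Adj (g.mapEdgeSet e₁) (g.mapEdgeSet e₂) := by
  obtain ⟨u, v, w, huv, hvw, huw, h₁, h₂⟩ := h
  exact ⟨g u, g v, g w, g.map_adj huv, g.map_adj hvw, g.map_adj huw,
    congrArg (Sym2.map g) h₁, congrArg (Sym2.map g) h₂⟩

theorem triLine_adj_iff_exists_isNClique {e₁ e₂ : G.edgeSet} :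
    (TriLine G).Adj e₁ e₂ ↔ e₁ ≠ e₂ ∧ ∃ t : Finset V, G.IsNClique 3 t ∧
      (e₁ : Sym2 V) ∈ t.sym2 ∧ (e₂ : Sym2 V) ∈ t.sym2 := by
  classical
  constructor
  · intro h
    refine ⟨h.ne, ?_⟩
    obtain ⟨u, v, w, huv, hvw, huw, h₁, h₂⟩ := h
    exact ⟨{u, v, w}, is3Clique_triple_iff.2 ⟨huv, huw, hvw⟩, by simp [h₁], by simp [h₂]⟩
  · obtain ⟨e₁, he₁⟩ := e₁
    obtain ⟨e₂, he₂⟩ := e₂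
    rintro ⟨hne, t, ht, h₁, h₂⟩
    obtain ⟨v, hv₁, hv₂⟩ : ∃ v ∈ e₁, v ∈ e₂ := by
      induction e₁ with | _ p q
      induction e₂ with | _ r s
      obtain ⟨a, b, c, -, -, -, rfl⟩ := is3Clique_iff.1 ht
      have hpq : p ≠ q := G.ne_of_adj he₁
      have hrs : r ≠ s := G.ne_of_adj he₂
      simp only [Finset.mk_mem_sym2_iff, Finset.mem_insert, Finset.mem_singleton] at h₁ h₂
      by_contra! h
      have hp := h p (Sym2.mem_mk_left p q)
      have hq := h q (Sym2.mem_mk_right p q)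
      simp only [Sym2.mem_iff] at hp hq
      grind
    obtain ⟨u, rfl⟩ := hv₁
    obtain ⟨w, rfl⟩ := hv₂
    have huw : u ≠ w := fun h => hne (by simp [h])
    simp only [Finset.mk_mem_sym2_iff] at h₁ h₂
    exact ⟨u, v, w, he₁.symm, he₂, ht.isClique h₁.2 h₂.2 huw, Sym2.eq_swap, rfl⟩

end TriLine

section Preimage

variable {V W κ : Type*} {G : SimpleGraph V} {H : SimpleGraph W} {K : SimpleGraph κ}

theorem edgePre_adj_iff (f : TriLine G ≃g H) {S : Set W} {a b : V} :
    (edgePre G f S).Adj a b ↔ ∃ h : G.Adj a b, f ⟨s(a, b), h⟩ ∈ S := by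
  constructor
  · rintro ⟨h, ⟨e, he⟩, rfl, hS⟩
    exact ⟨h, hS⟩
  · rintro ⟨h, hS⟩
    exact ⟨h, _, rfl, hS⟩

theorem edgePre_eq_toSubgraph (f : TriLine G ≃g H) {S : Set W} (ψ : K.Copy G)
    (hK : ∀ v, ∃ w, K.Adj v w) (hS : ∀ e, f e ∈ S ↔ e ∈ Set.range ψ.mapEdgeSet) :
    edgePre G f S = ψ.toSubgraph := by
  have adj_iff (a b : V) : (edgePre G f S).Adj a b ↔ ψ.toSubgraph.Adj a b := by
    rw [edgePre_adj_iff]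
    constructor
    · rintro ⟨h, hab⟩
      obtain ⟨⟨⟨x, y⟩, hxy⟩, he⟩ := (hS _).1 hab
      rcases Sym2.eq_iff.1 (congrArg Subtype.val he) with ⟨rfl, rfl⟩ | ⟨rfl, rfl⟩
      · exact ⟨x, y, hxy, rfl, rfl⟩
      · exact ⟨y, x, hxy.symm, rfl, rfl⟩
    · rintro ⟨x, y, hxy, rfl, rfl⟩
      exact ⟨ψ.toHom.map_adj hxy, (hS _).2 ⟨⟨s(x, y), hxy⟩, rfl⟩⟩
  ext a b
  · constructor
    · rintro ⟨b, ⟨e, he⟩, rfl, hS⟩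
      exact ((adj_iff a b).1 ⟨he, _, rfl, hS⟩).fst_mem
    · rintro ⟨x, -, rfl⟩
      obtain ⟨y, hxy⟩ := hK x
      exact ((adj_iff _ _).2 ⟨x, y, hxy, rfl, rfl⟩).fst_mem
  · exact adj_iff a b

end Preimage

section Gluing

variable {L σ V : Type*} {κ : L → Type*} {H : SimpleGraph σ} {K : ∀ l, SimpleGraph (κ l)}

/-- The union of the graphs `K l`, placed on a common vertex set by the embeddings `ψ l`. -/
def placedUnion (K : ∀ l, SimpleGraph (κ l)) (ψ : ∀ l, κ l ↪ V) : SimpleGraph V :=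
  ⨆ l, (K l).map (ψ l)

/-- The `l`-th graph as a copy inside the placed union. -/
def blockCopy (K : ∀ l, SimpleGraph (κ l)) (ψ : ∀ l, κ l ↪ V) (l : L) :
    (K l).Copy (placedUnion K ψ) where
  toHom := ⟨ψ l, fun h => iSup_adj.2 ⟨l, map_adj_apply.2 h⟩⟩
  injective' := (ψ l).injective

/-- The edge of the placed union corresponding to a vertex of one of the graphs `H ≅ T(K l)`. -/
def blockEdge (φ : ∀ l, H ≃g TriLine (K l)) (ψ : ∀ l, κ l ↪ V) (a : L × σ) :
    (placedUnion K ψ).edgeSet :=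
  (blockCopy K ψ a.1).mapEdgeSet (φ a.1 a.2)

/-- Every triangle of the placed union is a triangle of one of its constituents. -/
def TrianglesLocal (K : ∀ l, SimpleGraph (κ l)) (ψ : ∀ l, κ l ↪ V) : Prop :=
  ∀ ⦃u v w⦄, (placedUnion K ψ).Adj u v → (placedUnion K ψ).Adj v w → (placedUnion K ψ).Adj u w →
    ∃ l, ((K l).map (ψ l)).Adj u v ∧ ((K l).map (ψ l)).Adj v w ∧ ((K l).map (ψ l)).Adj u w

variable {ψ : ∀ l, κ l ↪ V}

theorem trianglesLocal_of_pairwise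
    (two : ∀ l m, l ≠ m → ∀ u v w, ((K l).map (ψ l)).Adj u v → ((K l).map (ψ l)).Adj v w →
      ((K m).map (ψ m)).Adj u w → ((K l).map (ψ l)).Adj u w)
    (three : ∀ l m n, l ≠ m → l ≠ n → m ≠ n → ∀ u v w, ((K l).map (ψ l)).Adj u v →
      ((K m).map (ψ m)).Adj v w → ¬((K n).map (ψ n)).Adj u w) :
    TrianglesLocal K ψ := by
  intro u v w huv hvw huw
  obtain ⟨l, hl⟩ := iSup_adj.1 huv
  obtain ⟨m, hm⟩ := iSup_adj.1 hvw
  obtain ⟨n, hn⟩ := iSup_adj.1 huw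
  by_cases hlm : l = m
  · subst hlm
    by_cases hln : l = n
    · exact ⟨l, hl, hm, hln ▸ hn⟩
    · exact ⟨l, hl, hm, two l n hln u v w hl hm hn⟩
  by_cases hln : l = n
  · subst hln
    exact ⟨l, hl, two l m hlm v u w hl.symm hn hm, hn⟩
  by_cases hmn : m = n
  · subst hmn
    exact ⟨m, two m l (Ne.symm hlm) u w v hn hm.symm hl, hm, hn⟩
  · exact (three l m n hlm hln hmn u v w hl hm hn).elim

variable (φ : ∀ l, H ≃g TriLine (K l))

theorem range_blockEdge (l : L) :
    Set.range (fun x => blockEdge φ ψ (l, x)) = Set.range (blockCopy K ψ l).mapEdgeSet :=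
  (φ l).surjective.range_comp (blockCopy K ψ l).mapEdgeSet

theorem blockEdge_injective (l : L) : Function.Injective fun x => blockEdge φ ψ (l, x) :=
  (blockCopy K ψ l).mapEdgeSet.injective.comp (φ l).injective

theorem blockEdge_surjective : Function.Surjective (blockEdge φ ψ) := by
  rintro ⟨⟨u, v⟩, huv⟩
  obtain ⟨l, hl⟩ := iSup_adj.1 huv
  obtain ⟨a, b, hab, rfl, rfl⟩ := (map_adj _ _ _ _).1 hl
  obtain ⟨x, hx⟩ := (range_blockEdge φ (ψ := ψ) l).ge ⟨⟨s(a, b), hab⟩, rfl⟩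
  exact ⟨(l, x), hx⟩

theorem TrianglesLocal.triLine_adj_iff (hψ : TrianglesLocal K ψ)
    {e₁ e₂ : (placedUnion K ψ).edgeSet} :
    (TriLine (placedUnion K ψ)).Adj e₁ e₂ ↔
      ∃ l x y, H.Adj x y ∧ e₁ = blockEdge φ ψ (l, x) ∧ e₂ = blockEdge φ ψ (l, y) := by
  constructor
  · obtain ⟨e₁, he₁⟩ := e₁
    obtain ⟨e₂, he₂⟩ := e₂
    rintro ⟨u, v, w, huv, hvw, huw, rfl, rfl⟩
    obtain ⟨l, huv, hvw, huw⟩ := hψ huv hvw huw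
    obtain ⟨a, b, hab, rfl, rfl⟩ := (map_adj _ _ _ _).1 huv
    obtain ⟨-, c, -, -, rfl⟩ := (map_adj _ _ _ _).1 hvw
    rw [map_adj_apply] at hvw huw
    refine ⟨l, (φ l).symm ⟨s(a, b), hab⟩, (φ l).symm ⟨s(b, c), hvw⟩, ?_, ?_, ?_⟩
    · rw [(φ l).symm.map_adj_iff]
      exact ⟨a, b, c, hab, hvw, huw, rfl, rfl⟩
    · simp only [blockEdge, RelIso.apply_symm_apply]; rfl
    · simp only [blockEdge, RelIso.apply_symm_apply]; rfl
  · rintro ⟨l, x, y, hxy, rfl, rfl⟩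
    exact triLine_adj_mapEdgeSet (blockCopy K ψ l).toHom ((φ l).map_adj_iff.2 hxy)

/-- The bijection between the vertices of the glued graph and the edges of the placed union. -/
noncomputable def gluedEquiv {R : L × σ → L × σ → Prop}
    (hR : ∀ a b, blockEdge φ ψ a = blockEdge φ ψ b ↔ Relation.EqvGen R a b) :
    Quotient (Relation.EqvGen.setoid R) ≃ (placedUnion K ψ).edgeSet :=
  (Quotient.congrRight fun a b => (hR a b).symm).trans
    (Setoid.quotientKerEquivOfSurjective _ (blockEdge_surjective φ))

/-- Gluing copies of `H ≅ T(K l)` along `R` amounts to overlaying the graphs `K l`. -/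
noncomputable def triLineIsoGlue (hψ : TrianglesLocal K ψ) {R : L × σ → L × σ → Prop}
    (hR : ∀ a b, blockEdge φ ψ a = blockEdge φ ψ b ↔ Relation.EqvGen R a b) :
    TriLine (placedUnion K ψ) ≃g Glue ((⊥ : SimpleGraph L) □ H) R :=
  RelIso.symm ⟨gluedEquiv φ hR, by
    intro a b
    induction a using Quotient.inductionOn with | _ a
    induction b using Quotient.inductionOn with | _ b
    have mk_eq (c d : L × σ) : (⟦c⟧ : Quotient (Relation.EqvGen.setoid R)) = ⟦d⟧ ↔
        blockEdge φ ψ c = blockEdge φ ψ d := Quotient.eq.trans (hR c d).symm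
    change (TriLine (placedUnion K ψ)).Adj (blockEdge φ ψ a) (blockEdge φ ψ b) ↔ _
    rw [hψ.triLine_adj_iff φ, Glue, fromRel_adj]
    constructor
    · rintro ⟨l, x, y, hxy, hx, hy⟩
      have hadj : ((⊥ : SimpleGraph L) □ H).Adj (l, x) (l, y) := boxProd_adj.2 (.inr ⟨hxy, rfl⟩)
      exact ⟨fun h => hxy.ne ((blockEdge_injective φ l).eq_iff.1 (hx.symm.trans
        (((mk_eq a b).1 h).trans hy))), .inl ⟨_, _, hadj, (mk_eq _ _).2 hx, (mk_eq _ _).2 hy⟩⟩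
    · rintro ⟨-, ⟨⟨l, x⟩, ⟨m, y⟩, hxy, hx, hy⟩ | ⟨⟨l, x⟩, ⟨m, y⟩, hxy, hx, hy⟩⟩ <;>
        obtain ⟨hlm, -⟩ | ⟨hxy, rfl : l = m⟩ := boxProd_adj.1 hxy
      · exact hlm.elim
      · exact ⟨l, x, y, hxy, (mk_eq _ _).1 hx, (mk_eq _ _).1 hy⟩
      · exact hlm.elim
      · exact ⟨l, y, x, hxy.symm, (mk_eq _ _).1 hy, (mk_eq _ _).1 hx⟩⟩

theorem nonempty_edgePre_triLineIsoGlue_iso (hψ : TrianglesLocal K ψ) {R : L × σ → L × σ → Prop}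
    (hR : ∀ a b, blockEdge φ ψ a = blockEdge φ ψ b ↔ Relation.EqvGen R a b) (l : L)
    (hK : ∀ v, ∃ w, (K l).Adj v w) :
    Nonempty ((edgePre (placedUnion K ψ) (triLineIsoGlue φ hψ hR)
      (Set.range fun x => ⟦(l, x)⟧)).coe ≃g K l) := by
  rw [edgePre_eq_toSubgraph (triLineIsoGlue φ hψ hR) (blockCopy K ψ l) hK]
  · exact ⟨(blockCopy K ψ l).isoToSubgraph.symm⟩
  · intro e
    rw [← range_blockEdge φ l]
    exact exists_congr fun x => (gluedEquiv φ hR).eq_symm_apply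

end Gluing

section Wheel

variable {k : ℕ}

/-- The vertices of the `i`-th outer triangle `vᵢ, vᵢ₊₁, pᵢ` of the `k`-sun. -/
def sunTriangle (i : ZMod k) : Set (ZMod k ⊕ ZMod k) :=
  {.inl i, .inl (i + 1), .inr i}

theorem sunGraph_adj_iff {x y : ZMod k ⊕ ZMod k} :
    (sunGraph k).Adj x y ↔ x ≠ y ∧ ∃ i, x ∈ sunTriangle i ∧ y ∈ sunTriangle i := by
  rw [sunGraph, fromRel_adj, ← exists_or]
  refine and_congr_right fun hxy => exists_congr fun i => ?_
  simp only [sunTriangle, Set.mem_insert_iff, Set.mem_singleton_iff]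
  grind

/-- Labelling the edges of `K` by the vertices of the sun, compatibly with triangles, identifies
the sun with the triangular line graph of `K`. -/
noncomputable def sunIsoTriLine {κ : Type*} {K : SimpleGraph κ} {e : ZMod k ⊕ ZMod k → Sym2 κ}
    (he : Function.Injective e) (hrange : Set.range e = K.edgeSet) {t : ZMod k → Finset κ}
    (ht : ∀ s, K.IsNClique 3 s ↔ ∃ i, s = t i)
    (het : ∀ x i, e x ∈ (t i).sym2 ↔ x ∈ sunTriangle i) : sunGraph k ≃g TriLine K where
  toEquiv := (Equiv.ofInjective e he).trans (Equiv.setCongr hrange)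
  map_rel_iff' {x y} := by
    simp only [triLine_adj_iff_exists_isNClique, sunGraph_adj_iff, ht, ← het]
    refine and_congr ((EmbeddingLike.apply_eq_iff_eq _).not) ⟨?_, ?_⟩
    · rintro ⟨_, ⟨i, rfl⟩, h⟩
      exact ⟨i, h⟩
    · rintro ⟨i, h⟩
      exact ⟨_, ⟨i, rfl⟩, h⟩

theorem natCast_zmod_ne_zero {n : ℕ} (hn : 0 < n) (hnk : n < k) : (n : ZMod k) ≠ 0 := by
  rw [Ne, ZMod.natCast_eq_zero_iff]
  exact Nat.not_dvd_of_pos_of_lt hn hnk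

theorem wheelGraph_adj_none_some (i : ZMod k) : (wheelGraph k).Adj none (some i) := by
  simp [wheelGraph]

theorem wheelGraph_adj_some (hk : 2 ≤ k) {i j : ZMod k} :
    (wheelGraph k).Adj (some i) (some j) ↔ j = i + 1 ∨ i = j + 1 := by
  have h1 := natCast_zmod_ne_zero (k := k) one_pos (by lia)
  simp only [wheelGraph, fromRel_adj]
  grind

theorem squaredCycleGraph_adj (hk : 3 ≤ k) {i j : ZMod k} :
    (squaredCycleGraph k).Adj i j ↔ (j = i + 1 ∨ j = i + 2) ∨ i = j + 1 ∨ i = j + 2 := by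
  have h2 := natCast_zmod_ne_zero (k := k) two_pos (by lia)
  rw [squaredCycleGraph, fromRel_adj, and_iff_right_iff_imp]
  grind

theorem isNClique_three_wheelGraph_iff (hk : 4 ≤ k) {s : Finset (Option (ZMod k))} :
    (wheelGraph k).IsNClique 3 s ↔ ∃ i, s = {none, some i, some (i + 1)} := by
  have h1 := natCast_zmod_ne_zero (k := k) one_pos (by lia)
  have h3 := natCast_zmod_ne_zero (k := k) three_pos (by lia)
  rw [is3Clique_iff]
  constructor
  · have hub {i j : ZMod k} (hij : (wheelGraph k).Adj (some i) (some j)) :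
        ∃ l, ({none, some i, some j} : Finset _) = {none, some l, some (l + 1)} := by
      rcases (wheelGraph_adj_some (by lia)).1 hij with rfl | rfl
      · exact ⟨i, rfl⟩
      · exact ⟨j, by rw [Finset.pair_comm]⟩
    rintro ⟨u, v, w, huv, huw, hvw, rfl⟩
    rcases u with _ | i
    · obtain ⟨j, rfl⟩ := Option.ne_none_iff_exists'.1 huv.ne'
      obtain ⟨l, rfl⟩ := Option.ne_none_iff_exists'.1 huw.ne'
      exact hub hvw
    rcases v with _ | j
    · obtain ⟨l, rfl⟩ := Option.ne_none_iff_exists'.1 hvw.ne'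
      rw [Finset.insert_comm]
      exact hub huw
    rcases w with _ | l
    · rw [Finset.pair_comm, Finset.insert_comm]
      exact hub huv
    · rw [wheelGraph_adj_some (by lia)] at huv huw hvw
      grind
  · rintro ⟨i, rfl⟩
    exact ⟨_, _, _, wheelGraph_adj_none_some i, wheelGraph_adj_none_some (i + 1),
      (wheelGraph_adj_some (by lia)).2 (.inl rfl), rfl⟩

theorem isNClique_three_squaredCycleGraph_iff (hk : 7 ≤ k) {s : Finset (ZMod k)} :
    (squaredCycleGraph k).IsNClique 3 s ↔ ∃ i, s = {i, i + 1, i + 2} := by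
  have h4 := natCast_zmod_ne_zero (k := k) four_pos (by lia)
  have h5 := natCast_zmod_ne_zero (k := k) (n := 5) (by lia) (by lia)
  have h6 := natCast_zmod_ne_zero (k := k) (n := 6) (by lia) (by lia)
  rw [is3Clique_iff]
  simp only [squaredCycleGraph_adj (show 3 ≤ k by lia)]
  constructor
  · rintro ⟨u, v, w, huv, huw, hvw, rfl⟩
    obtain ⟨rfl, rfl⟩ | ⟨rfl, rfl⟩ | ⟨rfl, rfl⟩ | ⟨rfl, rfl⟩ | ⟨rfl, rfl⟩ | ⟨rfl, rfl⟩ :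
        v = u + 1 ∧ w = u + 2 ∨ v = u + 2 ∧ w = u + 1 ∨ u = v + 1 ∧ w = v + 2 ∨
        u = v + 2 ∧ w = v + 1 ∨ u = w + 1 ∧ v = w + 2 ∨ u = w + 2 ∧ v = w + 1 := by grind
    · exact ⟨u, rfl⟩
    · exact ⟨u, by grind⟩
    · exact ⟨v, by grind⟩
    · exact ⟨v, by grind⟩
    · exact ⟨w, by grind⟩
    · exact ⟨w, by grind⟩
  · rintro ⟨i, rfl⟩
    exact ⟨_, _, _, .inl (.inl rfl), .inl (.inr rfl), .inl (.inl (by ring)), rfl⟩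

/-- The vertices of the sun as edges of the wheel: the cycle consists of the spokes, the degree-two
vertices are the rim edges. -/
def wheelEdge : ZMod k ⊕ ZMod k → Sym2 (Option (ZMod k))
  | .inl i => s(none, some i)
  | .inr i => s(some i, some (i + 1))

/-- The vertices of the sun as edges of the squared cycle: the cycle consists of the edges between
consecutive vertices, the degree-two vertices are the edges between vertices at distance two. -/
def squaredCycleEdge : ZMod k ⊕ ZMod k → Sym2 (ZMod k)
  | .inl i => s(i, i + 1)
  | .inr i => s(i, i + 2)

theorem wheelEdge_injective (hk : 3 ≤ k) :
    Function.Injective (wheelEdge : ZMod k ⊕ ZMod k → _) := by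
  have h2 := natCast_zmod_ne_zero (k := k) two_pos (by lia)
  rintro (i | i) (j | j) h <;> simp only [wheelEdge, Sym2.eq_iff] at h <;> grind

theorem squaredCycleEdge_injective (hk : 5 ≤ k) :
    Function.Injective (squaredCycleEdge : ZMod k ⊕ ZMod k → _) := by
  have h3 := natCast_zmod_ne_zero (k := k) three_pos (by lia)
  have h4 := natCast_zmod_ne_zero (k := k) four_pos (by lia)
  rintro (i | i) (j | j) h <;> simp only [squaredCycleEdge, Sym2.eq_iff] at h <;> grind

theorem range_wheelEdge (hk : 2 ≤ k) :
    Set.range (wheelEdge : ZMod k ⊕ ZMod k → _) = (wheelGraph k).edgeSet := by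
  ext e
  constructor
  · rintro ⟨i | i, rfl⟩
    · exact wheelGraph_adj_none_some i
    · exact (wheelGraph_adj_some hk).2 (.inl rfl)
  · induction e with | _ u v
    intro h
    rw [mem_edgeSet] at h
    rcases u with _ | i <;> rcases v with _ | j
    · exact absurd rfl h.ne
    · exact ⟨.inl j, rfl⟩
    · exact ⟨.inl i, Sym2.eq_swap⟩
    · rcases (wheelGraph_adj_some hk).1 h with rfl | rfl
      · exact ⟨.inr i, rfl⟩
      · exact ⟨.inr j, Sym2.eq_swap⟩

theorem range_squaredCycleEdge (hk : 3 ≤ k) :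
    Set.range (squaredCycleEdge : ZMod k ⊕ ZMod k → _) = (squaredCycleGraph k).edgeSet := by
  ext e
  constructor
  · rintro ⟨i | i, rfl⟩ <;> simp [squaredCycleEdge, squaredCycleGraph_adj hk]
  · induction e with | _ i j
    rw [mem_edgeSet, squaredCycleGraph_adj hk]
    rintro ((rfl | rfl) | rfl | rfl)
    · exact ⟨.inl i, rfl⟩
    · exact ⟨.inr i, rfl⟩
    · exact ⟨.inl j, Sym2.eq_swap⟩
    · exact ⟨.inr j, Sym2.eq_swap⟩

theorem wheelEdge_mem_sym2_iff (hk : 3 ≤ k) (x : ZMod k ⊕ ZMod k) (i : ZMod k) :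
    wheelEdge x ∈ ({none, some i, some (i + 1)} : Finset (Option (ZMod k))).sym2 ↔
      x ∈ sunTriangle i := by
  have h2 := natCast_zmod_ne_zero (k := k) two_pos (by lia)
  rcases x with j | j <;>
    simp only [wheelEdge, sunTriangle, Finset.mk_mem_sym2_iff, Finset.mem_insert,
      Finset.mem_singleton, Set.mem_insert_iff, Set.mem_singleton_iff] <;>
    grind

theorem squaredCycleEdge_mem_sym2_iff (hk : 5 ≤ k) (x : ZMod k ⊕ ZMod k) (i : ZMod k) :
    squaredCycleEdge x ∈ ({i, i + 1, i + 2} : Finset (ZMod k)).sym2 ↔ x ∈ sunTriangle i := by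
  have h3 := natCast_zmod_ne_zero (k := k) three_pos (by lia)
  have h4 := natCast_zmod_ne_zero (k := k) four_pos (by lia)
  rcases x with j | j <;>
    simp only [squaredCycleEdge, sunTriangle, Finset.mk_mem_sym2_iff, Finset.mem_insert,
      Finset.mem_singleton, Set.mem_insert_iff, Set.mem_singleton_iff] <;>
    grind

end Wheel

/-- The two roots `G` of the `k`-sun, i.e. graphs with `T(G)` isomorphic to the `k`-sun. -/
inductive SunRoot
  | wheel
  | squaredCycle
  deriving DecidableEq

instance : DecidableRel (wheelGraph 12).Adj
  | none, none => .isFalse (SimpleGraph.irrefl _)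
  | none, some i => .isTrue (wheelGraph_adj_none_some i)
  | some i, none => .isTrue (wheelGraph_adj_none_some i).symm
  | some _, some _ => decidable_of_iff' _ (wheelGraph_adj_some (by lia))

instance : DecidableRel (squaredCycleGraph 12).Adj :=
  fun _ _ => decidable_of_iff' _ (squaredCycleGraph_adj (by lia))

namespace SunRoot

/-- The vertex type of a root of the `k`-sun. -/
def Vert (k : ℕ) : SunRoot → Type
  | wheel => Option (ZMod k)
  | squaredCycle => ZMod k

/-- The graph underlying a root of the `k`-sun. -/
def graph (k : ℕ) : (r : SunRoot) → SimpleGraph (r.Vert k)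
  | wheel => wheelGraph k
  | squaredCycle => squaredCycleGraph k

/-- The edge of a root corresponding to a vertex of the `k`-sun. -/
def edge (k : ℕ) : (r : SunRoot) → ZMod k ⊕ ZMod k → Sym2 (r.Vert k)
  | wheel => wheelEdge
  | squaredCycle => squaredCycleEdge

/-- A root of the `k`-sun is a preimage of it. -/
noncomputable def sunIso {k : ℕ} (hk : 7 ≤ k) : (r : SunRoot) → sunGraph k ≃g TriLine (r.graph k)
  | wheel => sunIsoTriLine (wheelEdge_injective (by lia)) (range_wheelEdge (by lia))
      (fun _ => isNClique_three_wheelGraph_iff (by lia)) (wheelEdge_mem_sym2_iff (by lia))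
  | squaredCycle => sunIsoTriLine (squaredCycleEdge_injective (by lia))
      (range_squaredCycleEdge (by lia)) (fun _ => isNClique_three_squaredCycleGraph_iff hk)
      (squaredCycleEdge_mem_sym2_iff (by lia))

theorem coe_sunIso {k : ℕ} (hk : 7 ≤ k) (r : SunRoot) (x : ZMod k ⊕ ZMod k) :
    (sunIso hk r x : Sym2 (r.Vert k)) = r.edge k x := by
  cases r <;> rfl

theorem exists_graph_adj {k : ℕ} (hk : 3 ≤ k) :
    (r : SunRoot) → (v : r.Vert k) → ∃ w, (r.graph k).Adj v w
  | wheel, none => ⟨some 0, wheelGraph_adj_none_some 0⟩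
  | wheel, some i => ⟨none, (wheelGraph_adj_none_some i).symm⟩
  | squaredCycle, (i : ZMod k) => ⟨(i + 1 : ZMod k), (squaredCycleGraph_adj hk).2 (.inl (.inl rfl))⟩

instance : Fintype SunRoot :=
  ⟨{wheel, squaredCycle}, by rintro (_ | _) <;> decide⟩

instance (k : ℕ) [NeZero k] : (r : SunRoot) → Fintype (r.Vert k)
  | wheel => inferInstanceAs (Fintype (Option (ZMod k)))
  | squaredCycle => inferInstanceAs (Fintype (ZMod k))

instance (k : ℕ) : (r : SunRoot) → DecidableEq (r.Vert k)
  | wheel => inferInstanceAs (DecidableEq (Option (ZMod k)))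
  | squaredCycle => inferInstanceAs (DecidableEq (ZMod k))

instance : (r : SunRoot) → DecidableRel (r.graph 12).Adj
  | wheel => inferInstanceAs (DecidableRel (wheelGraph 12).Adj)
  | squaredCycle => inferInstanceAs (DecidableRel (squaredCycleGraph 12).Adj)

end SunRoot

section Clause

variable (c : ZMod 3 → SunRoot)

/-- In the triangle of `T⁻¹(G_l)` formed by the edges `a_{l,1}, a_{l,2}, a_{l,3}`, the vertex
opposite to `a_{l,2}`, as a vertex of the overlay of the three roots. -/
def corner₂ (l : ZMod 3) : ZMod 3 × ZMod 12 := (l, 0)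

/-- The vertex opposite to the edge `a_{l,1}`. -/
def corner₁ (l : ZMod 3) : ZMod 3 × ZMod 12 :=
  match c l with
  | .wheel => (l, 1)
  | .squaredCycle => (l, 2)

/-- The vertex opposite to the edge `a_{l,3}`; in a wheel it is the hub, which is also opposite to
`b_{l,3} = a_{l-1,2}`. -/
def corner₃ (l : ZMod 3) : ZMod 3 × ZMod 12 :=
  match c l with
  | .wheel => corner₂ (l - 1)
  | .squaredCycle => (l, 1)

/-- The placement of a wheel as `T⁻¹(G_l)`: the vertices opposite to `b_{l,1}, b_{l,2}, b_{l,3}`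
are those opposite to `a_{l-1,1}, a_{l-1,3}, a_{l-1,2}`. -/
def placeWheel (l : ZMod 3) : Option (ZMod 12) → ZMod 3 × ZMod 12
  | none => corner₂ (l - 1)
  | some i => if i = 6 then corner₃ c (l - 1) else if i = 7 then corner₁ c (l - 1) else (l, i)

/-- The placement of a squared cycle as `T⁻¹(G_l)`, following the same identifications as
`placeWheel`. -/
def placeSquaredCycle (l : ZMod 3) (i : ZMod 12) : ZMod 3 × ZMod 12 :=
  if i = 6 then corner₃ c (l - 1) else if i = 7 then corner₂ (l - 1) else
    if i = 8 then corner₁ c (l - 1) else (l, i)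

theorem placeWheel_injective (l : ZMod 3) : Function.Injective (placeWheel c l) := by
  rintro (_ | i) (_ | j) h <;>
    simp only [placeWheel, corner₁, corner₂, corner₃] at h <;> grind

theorem placeSquaredCycle_injective (l : ZMod 3) :
    Function.Injective (placeSquaredCycle c l) := by
  intro i j h
  simp only [placeSquaredCycle, corner₁, corner₂, corner₃] at h
  grind

/-- The placement of a root as `T⁻¹(G_l)`. -/
def placeRoot (l : ZMod 3) : (r : SunRoot) → r.Vert 12 ↪ ZMod 3 × ZMod 12
  | .wheel => ⟨placeWheel c l, placeWheel_injective c l⟩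
  | .squaredCycle => ⟨placeSquaredCycle c l, placeSquaredCycle_injective c l⟩

/-- The placement of the chosen root `c l` as `T⁻¹(G_l)`. -/
def place (l : ZMod 3) : (c l).Vert 12 ↪ ZMod 3 × ZMod 12 :=
  placeRoot c l (c l)

/-- The edge of the overlay of the chosen roots corresponding to a vertex of one of the suns. -/
def placedEdge (a : ZMod 3 × Sun12V) : Sym2 (ZMod 3 × ZMod 12) :=
  Sym2.map (place c a.1) ((c a.1).edge 12 a.2)

end Clause

instance : DecidableRel clauseRel :=
  fun _ _ => inferInstanceAs (Decidable (∃ _, _))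

theorem placedEdge_eq_of_clauseRel (c : ZMod 3 → SunRoot) {a b : ZMod 3 × Sun12V}
    (h : clauseRel a b) : placedEdge c a = placedEdge c b := by
  obtain ⟨l, ⟨rfl, rfl⟩ | ⟨rfl, rfl⟩ | ⟨rfl, rfl⟩⟩ := h
  · revert c l; decide +kernel
  · revert c l; decide +kernel
  · revert c l; decide +kernel

theorem clauseRel_of_placedEdge_eq : ∀ (c : ZMod 3 → SunRoot) l x y,
    placedEdge c (l, x) = placedEdge c (l + 1, y) → clauseRel (l, x) (l + 1, y) := by
  decide +kernel

theorem coe_blockEdge_sunIso (c : ZMod 3 → SunRoot) (a : ZMod 3 × Sun12V) :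
    (blockEdge (fun l => (c l).sunIso (by lia)) (place c) a : Sym2 _) = placedEdge c a :=
  congrArg (Sym2.map _) (SunRoot.coe_sunIso _ _ _)

theorem blockEdge_sunIso_eq_iff (c : ZMod 3 → SunRoot) (a b : ZMod 3 × Sun12V) :
    blockEdge (fun l => (c l).sunIso (by lia)) (place c) a =
      blockEdge (fun l => (c l).sunIso (by lia)) (place c) b ↔ Relation.EqvGen clauseRel a b := by
  rw [← Subtype.coe_inj, coe_blockEdge_sunIso, coe_blockEdge_sunIso]
  constructor
  · obtain ⟨l, x⟩ := a
    obtain ⟨m, y⟩ := b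
    intro h
    have cyclic : ∀ l m : ZMod 3, l = m ∨ m = l + 1 ∨ l = m + 1 := by decide
    obtain rfl | rfl | rfl := cyclic l m
    · rw [← coe_blockEdge_sunIso, ← coe_blockEdge_sunIso, Subtype.coe_inj] at h
      rw [blockEdge_injective _ l h]
      exact .refl _
    · exact .rel _ _ (clauseRel_of_placedEdge_eq c l x y h)
    · exact .symm _ _ (.rel _ _ (clauseRel_of_placedEdge_eq c m y x h.symm))
  · intro h
    induction h with
    | rel a b h => exact placedEdge_eq_of_clauseRel c h
    | refl a => rfl
    | symm a b _ h => exact h.symm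
    | trans a b d _ _ h₁ h₂ => exact h₁.trans h₂

-- In the next two statements the quantifiers are interleaved with the hypotheses so that the
-- exhaustive check prunes early.
theorem graph_adj_of_place_eq : ∀ c : ZMod 3 → SunRoot, (∃ l, c l = .squaredCycle) →
    ∀ l m, l ≠ m → ∀ u u', place c l u = place c m u' →
      ∀ w', ((c m).graph 12).Adj u' w' → ∀ w, place c l w = place c m w' →
        ¬((c l).graph 12).Adj u w → ∀ v, ((c l).graph 12).Adj u v → ¬((c l).graph 12).Adj v w := by
  decide +kernel

set_option synthInstance.maxSize 1000 in
set_option synthInstance.maxHeartbeats 200000 in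
-- The `Decidable` instance is assembled through some twenty nested quantifiers and implications.
theorem not_rainbow_triangle : ∀ c : ZMod 3 → SunRoot, (∃ l, c l = .squaredCycle) →
    ∀ l m n, l ≠ m → l ≠ n → m ≠ n → ∀ v v', place c l v = place c m v' →
      ∀ u, ((c l).graph 12).Adj u v → ∀ u', place c l u = place c n u' →
        ∀ w, ((c m).graph 12).Adj v' w → ∀ w', ((c n).graph 12).Adj u' w' →
          place c m w ≠ place c n w' := by
  decide +kernel

theorem trianglesLocal_place {c : ZMod 3 → SunRoot} (hc : ∃ l, c l = .squaredCycle) :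
    TrianglesLocal (fun l => (c l).graph 12) (place c) := by
  apply trianglesLocal_of_pairwise
  · rintro l m hlm _ _ _ ⟨-, u, v, huv, rfl, rfl⟩ hvw ⟨-, u', w', huw, hu, hw⟩
    obtain ⟨-, w, -, -, rfl⟩ := (map_adj _ _ _ _).1 hvw
    rw [map_adj_apply] at hvw ⊢
    by_contra h
    exact graph_adj_of_place_eq c hc l m hlm u u' hu.symm w' huw w hw.symm h v huv hvw
  · rintro l m n hlm hln hmn _ _ _ ⟨-, u, v, huv, rfl, rfl⟩ ⟨-, v', w, hvw, hv, rfl⟩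
      ⟨-, u', w', huw, hu, hw⟩
    exact not_rainbow_triangle c hc l m n hlm hln hmn v v' hv.symm u huv u' hu.symm w hvw w' huw
      hw.symm

theorem clauseBase_eq_boxProd : clauseBase = (⊥ : SimpleGraph (ZMod 3)) □ sunGraph 12 := by
  ext ⟨l, x⟩ ⟨m, y⟩
  simp only [clauseBase, fromRel_adj, boxProd_adj, bot_adj, false_and, false_or]
  constructor
  · rintro ⟨-, ⟨h, hxy⟩ | ⟨h, hxy⟩⟩
    · exact ⟨hxy, h⟩
    · exact ⟨hxy.symm, h.symm⟩
  · rintro ⟨hxy, h⟩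
    exact ⟨fun heq => hxy.ne (congrArg Prod.snd heq), .inl ⟨h, hxy⟩⟩

theorem clauseGadget_realizable_general (S : Finset (ZMod 3)) (hS : S ≠ Finset.univ) :
    ∃ (V : Type) (_ : Fintype V) (G : SimpleGraph V) (f : TriLine G ≃g clauseGadget), ∀ l,
      (l ∈ S → Nonempty ((edgePre G f (clauseSunVerts l)).coe ≃g wheelGraph 12)) ∧
      (l ∉ S → Nonempty ((edgePre G f (clauseSunVerts l)).coe ≃g squaredCycleGraph 12)) := by
  let c (l : ZMod 3) : SunRoot := if l ∈ S then .wheel else .squaredCycle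
  have hc : ∃ l, c l = .squaredCycle := by
    obtain ⟨l, hl⟩ := not_forall.1 (mt Finset.eq_univ_iff_forall.2 hS)
    exact ⟨l, if_neg hl⟩
  rw [clauseGadget, clauseBase_eq_boxProd]
  refine ⟨ZMod 3 × ZMod 12, inferInstance, placedUnion (fun l => (c l).graph 12) (place c),
    triLineIsoGlue _ (trianglesLocal_place hc) (blockEdge_sunIso_eq_iff c), fun l => ?_⟩
  have root : Nonempty ((edgePre _ _ (clauseSunVerts l)).coe ≃g (c l).graph 12) :=
    nonempty_edgePre_triLineIsoGlue_iso _ (trianglesLocal_place hc) (blockEdge_sunIso_eq_iff c) l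
      (SunRoot.exists_graph_adj (by lia) (c l))
  constructor
  · intro hl
    rwa [show c l = .wheel from if_pos hl] at root
  · intro hl
    rwa [show c l = .squaredCycle from if_neg hl] at root

/-- For each `w ∈ {0, 1, 2}`, the clause gadget admits a preimage in which exactly `w`
of the three 12-suns have 12-wheel preimages and the remaining ones have squared
12-cycle preimages. -/
theorem clauseGadget_realizable (w : ℕ) (hw : w ≤ 2) :
    ∃ (V : Type) (_ : Fintype V) (G : SimpleGraph V) (f : TriLine G ≃g clauseGadget)
      (S : Finset (ZMod 3)), S.card = w ∧
      ∀ l : ZMod 3,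
        (l ∈ S → Nonempty ((edgePre G f (clauseSunVerts l)).coe ≃g wheelGraph 12)) ∧
        (l ∉ S →
          Nonempty ((edgePre G f (clauseSunVerts l)).coe ≃g squaredCycleGraph 12)) := by
  obtain ⟨S, -, rfl⟩ := Finset.exists_subset_card_eq (s := (Finset.univ : Finset (ZMod 3)))
    (show w ≤ 3 by lia)
  obtain ⟨V, hV, G, f, h⟩ := clauseGadget_realizable_general S (by rintro rfl; contradiction)
  exact ⟨V, hV, G, f, S, rfl, h⟩
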